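/- For α ∈ (0,1), the Mittag-Leffler function E_{α,1} evaluated at a nonpositive real x satisfies the two-sided bound c₀/(1 - x) ≤ E_{α,1}(x) ≤ c₁/(1 - x) for all x ≤ 0, where the constants c₀, c₁ > 0 depend only on bounds 0 < α₀ ≤ α ≤ α₁ < 1. -/

import Mathlib

/-!
Write `u(t) = E_{α,1}(-t ^ α)`, `v(t) = t ^ (α - 1) E_{α,α}(-t ^ α)` and `k(t) = t ^ (α - 1) / Γ(α)`.
Termwise integration with Euler's Beta integral (`integral_ML`) gives four identities:

* `v = k - k * v`, so that `v` is the resolvent of the kernel `k` (`integral_resolvent`);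
* `u(t) = 1 - ∫₀ᵗ v` (`integral_ML_self`);
* `u = 1 - k * u` (used in `ML_one_upper`);
* `Γ(1 - α) u(t) = ∫₀ᵗ (t - s) ^ (-α) v(s) ds` (used in `ML_one_lower`).

The heart of the matter is `v > 0` (`ML_self_pos`), which comes from the resolvent equation and the
log-convexity of `k`. It makes `u` nonincreasing. The third identity then yields
`u(t) (1 + t ^ α / Γ(α + 1)) ≤ 1`, and the fourth yields `u(t) (1 + Γ(1 - α) t ^ α) ≥ 1`.
With `x = -t ^ α`, `Γ(α + 1) ≤ 1` and `Γ(1 - α) = Γ(2 - α) / (1 - α) ≤ 1 / (1 - α₁)`, the constants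
`c₀ = 1 - α₁` and `c₁ = 1` work.
-/

/-- Two-parameter Mittag-Leffler function (real arguments). -/
noncomputable def ML (α β x : ℝ) : ℝ := ∑' k : ℕ, x ^ k / Real.Gamma (α * k + β)

open Set Filter Topology MeasureTheory

/-- A lower bound for `Γ`, from the part of Euler's integral over `(A, ∞)`. Since `A` is arbitrary, `Γ`
outgrows every exponential, which is what makes the Mittag-Leffler series converge. -/
lemma rpow_mul_exp_neg_le_Gamma {A s : ℝ} (hA : 0 < A) (hs : 1 ≤ s) :
    A ^ (s - 1) * Real.exp (-A) ≤ Real.Gamma s := by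
  have hint := Real.GammaIntegral_convergent (s := s) (by linarith)
  rw [Real.Gamma_eq_integral (by linarith), ← integral_exp_neg_Ioi A, ← integral_const_mul]
  calc ∫ t in Ioi A, A ^ (s - 1) * Real.exp (-t)
      ≤ ∫ t in Ioi A, Real.exp (-t) * t ^ (s - 1) := by
        refine setIntegral_mono_on ?_ (hint.mono_set (Ioi_subset_Ioi hA.le)) measurableSet_Ioi ?_
        · exact (integrableOn_exp_neg_Ioi A).const_mul _
        · intro t ht
          rw [mul_comm]
          have : A ^ (s - 1) ≤ t ^ (s - 1) :=
            Real.rpow_le_rpow hA.le (le_of_lt ht) (by linarith)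
          gcongr
    _ ≤ ∫ t in Ioi (0 : ℝ), Real.exp (-t) * t ^ (s - 1) := by
        refine setIntegral_mono_set hint ?_ (Ioi_subset_Ioi hA.le).eventuallyLE
        filter_upwards [ae_restrict_mem measurableSet_Ioi] with t ht
        have : (0 : ℝ) < t := ht
        positivity

lemma gamma_arg_pos {α β : ℝ} (hα : 0 < α) (hβ : 0 < β) (k : ℕ) : 0 < α * k + β := by
  positivity

lemma summable_ML {α β : ℝ} (hα : 0 < α) (hβ : 0 < β) (x : ℝ) :
    Summable fun k : ℕ => x ^ k / Real.Gamma (α * k + β) := by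
  -- The choice `A ^ α = 2 * (|x| + 1)` makes the `k`-th term at most a constant times `2⁻ᵏ`.
  set A : ℝ := (2 * (|x| + 1)) ^ α⁻¹ with hA
  have hx : 0 < 2 * (|x| + 1) := by positivity
  have hApos : 0 < A := by positivity
  have hAα : A ^ α = 2 * (|x| + 1) := Real.rpow_inv_rpow hx.le hα.ne'
  have hgeo : Summable fun k : ℕ => (A ^ (β - 1) * Real.exp (-A))⁻¹ * (1 / 2 : ℝ) ^ k :=
    summable_geometric_two.mul_left _
  refine hgeo.of_norm_bounded_eventually_nat ?_
  have hlarge : ∀ᶠ k : ℕ in atTop, 1 ≤ α * k + β := by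
    filter_upwards [(tendsto_natCast_atTop_atTop (R := ℝ)).eventually_ge_atTop (1 / α)] with k hk
    rw [div_le_iff₀ hα] at hk
    linarith
  filter_upwards [hlarge] with k hk
  have hG := rpow_mul_exp_neg_le_Gamma hApos hk
  have hsplit : A ^ (α * k + β - 1) = (2 * (|x| + 1)) ^ k * A ^ (β - 1) := by
    rw [add_sub_assoc, Real.rpow_add hApos, Real.rpow_mul hApos.le, hAα, Real.rpow_natCast]
  rw [hsplit] at hG
  have hGp := Real.Gamma_pos_of_pos (gamma_arg_pos hα hβ k)
  rw [norm_div, norm_pow, Real.norm_eq_abs, Real.norm_of_nonneg hGp.le, div_le_iff₀ hGp]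
  have hC : 0 < A ^ (β - 1) * Real.exp (-A) := by positivity
  calc |x| ^ k ≤ (|x| + 1) ^ k := by gcongr; linarith
    _ = (A ^ (β - 1) * Real.exp (-A))⁻¹ * (1 / 2 : ℝ) ^ k *
          ((2 * (|x| + 1)) ^ k * A ^ (β - 1) * Real.exp (-A)) := by
        rw [mul_pow]; field_simp; rw [← mul_pow]; norm_num
    _ ≤ _ := by gcongr

lemma continuous_ML {α β : ℝ} (hα : 0 < α) (hβ : 0 < β) : Continuous (ML α β) := by
  rw [continuous_iff_continuousAt]
  intro x
  have hball : Metric.closedBall (0 : ℝ) (|x| + 1) ∈ 𝓝 x :=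
    Metric.closedBall_mem_nhds_of_mem (by simp)
  refine ContinuousOn.continuousAt ?_ hball
  refine continuousOn_tsum (fun k => by fun_prop) (summable_ML hα hβ (|x| + 1)) ?_
  intro k y hy
  have hGp := Real.Gamma_pos_of_pos (gamma_arg_pos hα hβ k)
  rw [norm_div, norm_pow, Real.norm_of_nonneg hGp.le]
  have : ‖y‖ ≤ |x| + 1 := by simpa using hy
  gcongr

lemma ML_zero (α β : ℝ) : ML α β 0 = 1 / Real.Gamma β := by
  rw [ML, tsum_eq_single 0]
  · simp
  · intro k hk; simp [hk]

/-- The recurrence `E_{α,β}(x) = 1 / Γ(β) + x E_{α,α+β}(x)`, obtained by splitting off the term `k = 0`. -/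
lemma ML_shift {α β : ℝ} (hα : 0 < α) (hβ : 0 < β) (x : ℝ) :
    ML α β x = 1 / Real.Gamma β + x * ML α (α + β) x := by
  rw [ML, (summable_ML hα hβ x).tsum_eq_zero_add, ML, ← tsum_mul_left]
  congr 1
  · simp
  · refine tsum_congr fun k => ?_
    rw [pow_succ']
    push_cast
    ring_nf

/-- The real form of Euler's Beta integral, scaled to `[0, t]`. -/
lemma integral_rpow_mul_rpow {β γ t : ℝ} (hβ : 0 < β) (hγ : 0 < γ) (ht : 0 < t) :
    ∫ s in (0 : ℝ)..t, s ^ (β - 1) * (t - s) ^ (γ - 1) =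
      t ^ (β + γ - 1) * (Real.Gamma β * Real.Gamma γ / Real.Gamma (β + γ)) := by
  have h := Complex.betaIntegral_scaled β γ ht
  rw [Complex.betaIntegral_eq_Gamma_mul_div _ _ (by simpa) (by simpa)] at h
  apply Complex.ofReal_injective
  rw [← intervalIntegral.integral_ofReal]
  push_cast [Complex.ofReal_cpow ht.le, ← Complex.Gamma_ofReal]
  rw [← h]
  refine intervalIntegral.integral_congr fun s hs => ?_
  rw [uIcc_of_le ht.le] at hs
  rw [Complex.ofReal_cpow hs.1, Complex.ofReal_cpow (sub_nonneg.2 hs.2)]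
  push_cast
  rfl

lemma intervalIntegrable_rpow_mul_rpow {β γ t : ℝ} (hβ : 0 < β) (hγ : 0 < γ) (ht : 0 < t) :
    IntervalIntegrable (fun s => s ^ (β - 1) * (t - s) ^ (γ - 1)) volume 0 t := by
  apply intervalIntegral.intervalIntegrable_of_integral_ne_zero
  rw [integral_rpow_mul_rpow hβ hγ ht]
  have := Real.Gamma_pos_of_pos hβ
  have := Real.Gamma_pos_of_pos hγ
  have := Real.Gamma_pos_of_pos (add_pos hβ hγ)
  positivity

lemma continuous_ML_neg_rpow {α β : ℝ} (hα : 0 < α) (hβ : 0 < β) :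
    Continuous fun s : ℝ => ML α β (-s ^ α) :=
  (continuous_ML hα hβ).comp (Real.continuous_rpow_const hα.le).neg

lemma intervalIntegrable_ML {α β γ t : ℝ} (hα : 0 < α) (hβ : 0 < β) (hγ : 0 < γ) (ht : 0 < t) :
    IntervalIntegrable (fun s => s ^ (β - 1) * (t - s) ^ (γ - 1) * ML α β (-s ^ α)) volume 0 t :=
  (intervalIntegrable_rpow_mul_rpow hβ hγ ht).mul_continuousOn
    (continuous_ML_neg_rpow hα hβ).continuousOn

/-- The Riemann-Liouville integral of order `γ` maps `s ^ (β - 1) E_{α,β}(-s ^ α)` to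
`t ^ (β + γ - 1) E_{α,β+γ}(-t ^ α)`: term by term, this is Euler's Beta integral. -/
lemma integral_ML {α β γ t : ℝ} (hα : 0 < α) (hβ : 0 < β) (hγ : 0 < γ) (ht : 0 < t) :
    ∫ s in (0 : ℝ)..t, s ^ (β - 1) * (t - s) ^ (γ - 1) * ML α β (-s ^ α) =
      Real.Gamma γ * t ^ (β + γ - 1) * ML α (β + γ) (-t ^ α) := by
  -- The `k`-th term of the integrand, without its sign `(-1) ^ k`.
  let P : ℕ → ℝ → ℝ := fun k s =>
    (Real.Gamma (α * k + β))⁻¹ * (s ^ (α * k + β - 1) * (t - s) ^ (γ - 1))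
  have hGp := fun k : ℕ => Real.Gamma_pos_of_pos (gamma_arg_pos hα hβ k)
  have hPint : ∀ k, IntervalIntegrable (P k) volume 0 t := fun k =>
    (intervalIntegrable_rpow_mul_rpow (gamma_arg_pos hα hβ k) hγ ht).const_mul _
  have hPval : ∀ k, ∫ s in (0 : ℝ)..t, P k s =
      Real.Gamma γ * t ^ (β + γ - 1) * ((t ^ α) ^ k / Real.Gamma (α * k + (β + γ))) := by
    intro k
    have hne := (hGp k).ne'
    rw [intervalIntegral.integral_const_mul,
      integral_rpow_mul_rpow (gamma_arg_pos hα hβ k) hγ ht, add_assoc, add_sub_assoc,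
      Real.rpow_add ht, Real.rpow_mul ht.le, Real.rpow_natCast]
    field_simp
  have hnorm : ∀ k, ∫ s in Ioc 0 t, ‖(-1) ^ k * P k s‖ = ∫ s in (0 : ℝ)..t, P k s := by
    intro k
    rw [intervalIntegral.integral_of_le ht.le]
    refine setIntegral_congr_fun measurableSet_Ioc fun s hs => ?_
    have h1 : 0 ≤ s := hs.1.le
    have h2 : 0 ≤ t - s := sub_nonneg.2 hs.2
    have h3 := hGp k
    have : 0 ≤ P k s := by positivity
    simp [abs_of_nonneg this]
  have hsum := hasSum_integral_of_summable_integral_norm (μ := volume.restrict (Ioc 0 t))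
    (F := fun (k : ℕ) s => (-1) ^ k * P k s)
    (fun k => ((intervalIntegrable_iff_integrableOn_Ioc_of_le ht.le).1 (hPint k)).const_mul _)
    (by
      simp_rw [hnorm, hPval]
      exact (summable_ML hα (add_pos hβ hγ) _).mul_left _)
  rw [intervalIntegral.integral_of_le ht.le, ML, ← tsum_mul_left]
  calc _ = ∫ s in Ioc 0 t, ∑' k : ℕ, (-1) ^ k * P k s := by
        refine setIntegral_congr_fun measurableSet_Ioc fun s hs => ?_
        simp only [ML]
        rw [← tsum_mul_left]
        refine tsum_congr fun k => ?_
        simp only [P]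
        rw [neg_pow, add_sub_assoc, Real.rpow_add hs.1, Real.rpow_mul hs.1.le, Real.rpow_natCast]
        ring
    _ = _ := by
        rw [← hsum.tsum_eq]
        refine tsum_congr fun k => ?_
        rw [integral_const_mul, ← intervalIntegral.integral_of_le ht.le, hPval, neg_pow (t ^ α)]
        ring

/-- The resolvent equation `k * v = k - v` for `k(t) = t ^ (α - 1) / Γ(α)` and
`v(t) = t ^ (α - 1) E_{α,α}(-t ^ α)`, multiplied by `Γ(α)`. -/
lemma integral_resolvent {α t : ℝ} (hα : 0 < α) (ht : 0 < t) :
    ∫ s in (0 : ℝ)..t, s ^ (α - 1) * (t - s) ^ (α - 1) * ML α α (-s ^ α) =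
      t ^ (α - 1) - Real.Gamma α * (t ^ (α - 1) * ML α α (-t ^ α)) := by
  have hG := (Real.Gamma_pos_of_pos hα).ne'
  rw [integral_ML hα hα hα ht, ML_shift hα hα (-t ^ α), add_sub_assoc, Real.rpow_add ht]
  field_simp
  ring

/-- Log-convexity of the kernel `t ^ (α - 1)`: the ratio `(b - s) ^ (α - 1) / (a - s) ^ (α - 1)` is largest
at `s = 0`. -/
lemma kernel_le {α a b s : ℝ} (h1 : α < 1) (hs : 0 ≤ s) (hsa : s < a) (hab : a ≤ b) :
    (b - s) ^ (α - 1) ≤ (a / b) ^ (1 - α) * (a - s) ^ (α - 1) := by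
  have hb : 0 < b := by linarith
  have ha : 0 < a := by linarith
  have hbs : 0 < b - s := by linarith
  have has : 0 < a - s := by linarith
  have hq : (a - s) / (b - s) ≤ a / b := by
    rw [div_le_div_iff₀ hbs hb]; nlinarith
  have hr : ((a - s) / (b - s)) ^ (1 - α) ≤ (a / b) ^ (1 - α) :=
    Real.rpow_le_rpow (by positivity) hq (by linarith)
  calc (b - s) ^ (α - 1) = ((a - s) / (b - s)) ^ (1 - α) * (a - s) ^ (α - 1) := by
        rw [Real.div_rpow has.le hbs.le, ← neg_sub 1 α, Real.rpow_neg hbs.le,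
          Real.rpow_neg has.le]
        field_simp
    _ ≤ _ := by gcongr

/-- `E_{α,α}` is positive on the nonpositive half-line. At a first zero `b` of `v`, the resolvent equation
is compared with the one at an earlier point `a`, chosen as a maximum point of `v` on a short interval
ending at `b`. By `kernel_le` the history on `[0, a]` contributes to `Γ(α) v(b)` at least a fixed
fraction of `Γ(α) v(a)`, and the interval `[a, b]` is too short to cancel that. -/
lemma ML_self_pos {α : ℝ} (hα : 0 < α) (h1 : α < 1) {t : ℝ} (ht : 0 ≤ t) :
    0 < ML α α (-t ^ α) := by
  by_contra! hneg
  have hΓ := Real.Gamma_pos_of_pos hα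
  have hcont := continuous_ML_neg_rpow hα hα
  -- `b` is the first point where positivity fails.
  let S : Set ℝ := Ici 0 ∩ {s | ML α α (-s ^ α) ≤ 0}
  have hSbdd : BddBelow S := ⟨0, fun s hs => hs.1⟩
  have hSclosed : IsClosed S := isClosed_Ici.inter (isClosed_le hcont continuous_const)
  have hmem : sInf S ∈ S := hSclosed.csInf_mem ⟨t, ht, hneg⟩ hSbdd
  set b := sInf S with hb
  have hb0 : 0 < b := by
    refine lt_of_le_of_ne hmem.1 fun h => ?_
    have h2 : ML α α (-b ^ α) ≤ 0 := hmem.2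
    rw [← h, Real.zero_rpow hα.ne', neg_zero, ML_zero] at h2
    exact absurd h2 (not_le.2 (by positivity))
  have hposlt : ∀ s, 0 ≤ s → s < b → 0 < ML α α (-s ^ α) := fun s hs0 hsb => by
    by_contra! h
    exact absurd (csInf_le hSbdd (show s ∈ S from ⟨hs0, h⟩)) (not_le.2 hsb)
  let V : ℝ → ℝ := fun s => s ^ (α - 1) * ML α α (-s ^ α)
  have hVb : V b ≤ 0 := mul_nonpos_of_nonneg_of_nonpos (by positivity) hmem.2
  have hVpos : ∀ s, 0 < s → s < b → 0 < V s := fun s hs0 hsb =>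
    mul_pos (by positivity) (hposlt s hs0.le hsb)
  -- A left neighbour `c` of `b` so close that `[c, b]` carries little mass of the kernel.
  obtain ⟨c, hcb, hc2, hcα⟩ :
      ∃ c, c < b ∧ b / 2 < c ∧ (b - c) ^ α / α < Real.Gamma α / 2 := by
    have hlim : Tendsto (fun c : ℝ => (b - c) ^ α / α) (𝓝[<] b) (𝓝 ((b - b) ^ α / α)) := by
      have : Continuous fun c : ℝ => (b - c) ^ α / α :=
        ((Real.continuous_rpow_const hα.le).comp (continuous_const.sub continuous_id)).div_const _
      exact (this.tendsto b).mono_left nhdsWithin_le_nhds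
    rw [sub_self, Real.zero_rpow hα.ne', zero_div] at hlim
    have e1 := hlim.eventually_lt_const (half_pos hΓ)
    have e2 : ∀ᶠ c in 𝓝[<] b, b / 2 < c :=
      nhdsWithin_le_nhds (lt_mem_nhds (half_lt_self hb0))
    obtain ⟨c, ⟨hc1, hc2⟩, hc3⟩ := ((e1.and e2).and self_mem_nhdsWithin).exists
    exact ⟨c, hc3, hc2, hc1⟩
  have hVcont : ContinuousOn V (Icc c b) := by
    refine ContinuousOn.mul (fun s hs => ?_) hcont.continuousOn
    exact (Real.continuousAt_rpow_const s _ (Or.inl (by linarith [hs.1]))).continuousWithinAt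
  obtain ⟨a, ⟨hca, hab⟩, hmax⟩ :=
    isCompact_Icc.exists_isMaxOn (nonempty_Icc.2 hcb.le) hVcont
  have hVa : 0 < V a :=
    (hVpos c (by linarith) hcb).trans_le (hmax (left_mem_Icc.2 hcb.le))
  have hab' : a < b := lt_of_le_of_ne hab fun h => absurd (h ▸ hVa) (not_lt.2 hVb)
  have ha0 : 0 < a := by linarith
  set r := (a / b) ^ (1 - α) with hr
  have hr2 : 1 / 2 ≤ r := by
    calc (1 / 2 : ℝ) ≤ a / b := by rw [div_le_div_iff₀ two_pos hb0]; linarith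
      _ = (a / b) ^ (1 : ℝ) := (Real.rpow_one _).symm
      _ ≤ r := Real.rpow_le_rpow_of_exponent_ge (by positivity)
          ((div_le_one hb0).2 hab) (by linarith)
  have hra : r * a ^ (α - 1) = b ^ (α - 1) := by
    rw [hr, Real.div_rpow ha0.le hb0.le, ← neg_sub 1 α, Real.rpow_neg hb0.le,
      Real.rpow_neg ha0.le]
    field_simp
  have hintb := intervalIntegrable_ML hα hα hα hb0
  have hint1 := hintb.mono_set (c := 0) (d := a)
    (by rw [uIcc_of_le ha0.le, uIcc_of_le hb0.le]; exact Icc_subset_Icc_right hab)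
  have hint2 := hintb.mono_set (c := a) (d := b)
    (by rw [uIcc_of_le hab, uIcc_of_le hb0.le]; exact Icc_subset_Icc_left ha0.le)
  have hfirst : ∫ s in (0 : ℝ)..a, s ^ (α - 1) * (b - s) ^ (α - 1) * ML α α (-s ^ α) ≤
      r * (a ^ (α - 1) - Real.Gamma α * V a) := by
    rw [← integral_resolvent hα ha0, ← intervalIntegral.integral_const_mul]
    refine intervalIntegral.integral_mono_on_of_le_Ioo ha0.le hint1
      ((intervalIntegrable_ML hα hα hα ha0).const_mul _) fun s hs => ?_
    have hk := kernel_le h1 hs.1.le hs.2 hab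
    have := hVpos s hs.1 (hs.2.trans hab')
    calc s ^ (α - 1) * (b - s) ^ (α - 1) * ML α α (-s ^ α) = (b - s) ^ (α - 1) * V s := by
          simp only [V]; ring
      _ ≤ r * (a - s) ^ (α - 1) * V s := by gcongr
      _ = _ := by simp only [V]; ring
  have hkint : IntervalIntegrable (fun s => (b - s) ^ (α - 1)) volume a b := by
    have := (intervalIntegral.intervalIntegrable_rpow' (a := b - a) (b := b - b)
      (r := α - 1) (by linarith)).comp_sub_left b
    simpa using this
  have hkval : ∫ s in a..b, (b - s) ^ (α - 1) = (b - a) ^ α / α := by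
    rw [intervalIntegral.integral_comp_sub_left (fun s => s ^ (α - 1)), sub_self,
      integral_rpow (Or.inl (by linarith)), sub_add_cancel, Real.zero_rpow hα.ne', sub_zero]
  have hsecond : ∫ s in a..b, s ^ (α - 1) * (b - s) ^ (α - 1) * ML α α (-s ^ α) ≤
      V a * ((b - a) ^ α / α) := by
    rw [← hkval, ← intervalIntegral.integral_const_mul]
    refine intervalIntegral.integral_mono_on hab hint2 (hkint.const_mul _) fun s hs => ?_
    have hVs : V s ≤ V a := hmax ⟨hca.trans hs.1, hs.2⟩
    have : 0 ≤ b - s := sub_nonneg.2 hs.2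
    calc s ^ (α - 1) * (b - s) ^ (α - 1) * ML α α (-s ^ α) = V s * (b - s) ^ (α - 1) := by
          simp only [V]; ring
      _ ≤ _ := by gcongr
  have htot := integral_resolvent hα hb0
  rw [← intervalIntegral.integral_add_adjacent_intervals hint1 hint2] at htot
  change _ = _ - Real.Gamma α * V b at htot
  have hmass : (b - a) ^ α / α < Real.Gamma α / 2 := by
    refine lt_of_le_of_lt ?_ hcα
    gcongr
  have hkey : V a * (r * Real.Gamma α - (b - a) ^ α / α) ≤ Real.Gamma α * V b := by
    rw [mul_sub, hra] at hfirst
    linarith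
  have hgap : 0 < r * Real.Gamma α - (b - a) ^ α / α := by nlinarith
  have := mul_pos hVa hgap
  nlinarith

/-- `u(t) = E_{α,1}(-t ^ α)` satisfies `u = 1 - ∫ v` with `v(t) = t ^ (α - 1) E_{α,α}(-t ^ α)`. -/
lemma integral_ML_self {α t : ℝ} (hα : 0 < α) (ht : 0 < t) :
    ∫ s in (0 : ℝ)..t, s ^ (α - 1) * ML α α (-s ^ α) = 1 - ML α 1 (-t ^ α) := by
  have h := integral_ML hα hα one_pos ht
  simp only [sub_self, Real.rpow_zero, mul_one, Real.Gamma_one, one_mul,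
    add_sub_cancel_right] at h
  rw [h, ML_shift hα one_pos (-t ^ α), Real.Gamma_one]
  ring

lemma intervalIntegrable_ML_self {α t : ℝ} (hα : 0 < α) :
    IntervalIntegrable (fun s => s ^ (α - 1) * ML α α (-s ^ α)) volume 0 t :=
  (intervalIntegral.intervalIntegrable_rpow' (by linarith)).mul_continuousOn
    (continuous_ML_neg_rpow hα hα).continuousOn

lemma ML_one_antitone {α s t : ℝ} (hα : 0 < α) (h1 : α < 1) (hs : 0 < s) (hst : s ≤ t) :
    ML α 1 (-t ^ α) ≤ ML α 1 (-s ^ α) := by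
  have ht : 0 < t := hs.trans_le hst
  have hmono : ∫ x in (0 : ℝ)..s, x ^ (α - 1) * ML α α (-x ^ α) ≤
      ∫ x in (0 : ℝ)..t, x ^ (α - 1) * ML α α (-x ^ α) := by
    refine intervalIntegral.integral_mono_interval le_rfl hs.le hst ?_
      (intervalIntegrable_ML_self hα)
    filter_upwards [ae_restrict_mem measurableSet_Ioc] with x hx
    have := ML_self_pos hα h1 hx.1.le
    have := hx.1
    simp only [Pi.zero_apply]
    positivity
  rw [integral_ML_self hα hs, integral_ML_self hα ht] at hmono
  linarith

/-- From `u + k * u = 1` for the nonincreasing function `u(t) = E_{α,1}(-t ^ α)`: replacing `u(s)` by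
`u(t)` in the convolution gives `u(t) (1 + t ^ α / Γ(α + 1)) ≤ 1`. -/
lemma ML_one_upper {α t : ℝ} (hα : 0 < α) (h1 : α < 1) (ht : 0 < t) :
    ML α 1 (-t ^ α) * (Real.Gamma (α + 1) + t ^ α) ≤ Real.Gamma (α + 1) := by
  have hΓ := Real.Gamma_pos_of_pos hα
  have hval := integral_ML hα one_pos hα ht
  have hint := intervalIntegrable_ML hα one_pos hα ht
  have hk := integral_rpow_mul_rpow one_pos hα ht
  have hkint := intervalIntegrable_rpow_mul_rpow one_pos hα ht
  simp only [sub_self, Real.rpow_zero, one_mul, add_sub_cancel_left, Real.Gamma_one] at *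
  have hle : ∫ s in (0 : ℝ)..t, (t - s) ^ (α - 1) * ML α 1 (-t ^ α) ≤
      ∫ s in (0 : ℝ)..t, (t - s) ^ (α - 1) * ML α 1 (-s ^ α) := by
    refine intervalIntegral.integral_mono_on_of_le_Ioo ht.le (hkint.mul_const _) hint
      fun s hs => ?_
    have := ML_one_antitone hα h1 hs.1 hs.2.le
    have : 0 ≤ t - s := by linarith [hs.2]
    gcongr
  have hshift := ML_shift hα one_pos (-t ^ α)
  rw [intervalIntegral.integral_mul_const, hk, hval] at hle
  rw [Real.Gamma_one, add_comm α 1] at hshift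
  have hG1 : Real.Gamma (1 + α) = α * Real.Gamma α := by
    rw [add_comm, Real.Gamma_add_one hα.ne']
  rw [add_comm α 1]
  have hGp : 0 < Real.Gamma (1 + α) := Real.Gamma_pos_of_pos (by linarith)
  have h3 : t ^ α * ML α 1 (-t ^ α) / Real.Gamma (1 + α) ≤ t ^ α * ML α (1 + α) (-t ^ α) := by
    refine le_of_mul_le_mul_left (le_of_eq_of_le ?_ (hle.trans_eq ?_)) hΓ <;> ring
  rw [div_le_iff₀ hGp] at h3
  nlinarith

/-- The function `u(t) = E_{α,1}(-t ^ α)` is the fractional integral of order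
`1 - α` of `v ≥ 0`, where `v` is minus the derivative of `u`; the
kernel is at least `t ^ (-α) / Γ(1 - α)` on `(0, t)`. Hence `u(t) ≥ t ^ (-α) (1 - u(t)) / Γ(1 - α)`. -/
lemma ML_one_lower {α t : ℝ} (hα : 0 < α) (h1 : α < 1) (ht : 0 < t) :
    1 ≤ ML α 1 (-t ^ α) * (1 + Real.Gamma (1 - α) * t ^ α) := by
  have hα' : 0 < 1 - α := by linarith
  have hval := integral_ML hα hα hα' ht
  have hint := intervalIntegrable_ML hα hα hα' ht
  rw [add_sub_cancel, sub_self, Real.rpow_zero, mul_one] at hval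
  have hle : ∫ s in (0 : ℝ)..t, t ^ (-α) * (s ^ (α - 1) * ML α α (-s ^ α)) ≤
      ∫ s in (0 : ℝ)..t, s ^ (α - 1) * (t - s) ^ (1 - α - 1) * ML α α (-s ^ α) := by
    refine intervalIntegral.integral_mono_on_of_le_Ioo ht.le
      ((intervalIntegrable_ML_self hα).const_mul _) hint fun s hs => ?_
    have hg := ML_self_pos hα h1 hs.1.le
    have hs0 := hs.1
    have hk : t ^ (-α) ≤ (t - s) ^ (1 - α - 1) := by
      rw [show 1 - α - 1 = -α by ring]
      exact Real.rpow_le_rpow_of_nonpos (by linarith [hs.2]) (by linarith) (by linarith)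
    calc t ^ (-α) * (s ^ (α - 1) * ML α α (-s ^ α))
        ≤ (t - s) ^ (1 - α - 1) * (s ^ (α - 1) * ML α α (-s ^ α)) := by gcongr
      _ = _ := by ring
  rw [intervalIntegral.integral_const_mul, integral_ML_self hα ht, hval, Real.rpow_neg ht.le,
    inv_mul_le_iff₀ (by positivity)] at hle
  linarith

lemma Gamma_le_one {s : ℝ} (h1 : 1 ≤ s) (h2 : s ≤ 2) : Real.Gamma s ≤ 1 := by
  have h := Real.convexOn_Gamma.2 (mem_Ioi.2 one_pos) (mem_Ioi.2 two_pos)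
    (show 0 ≤ 2 - s by linarith) (show 0 ≤ s - 1 by linarith) (by ring)
  simp only [smul_eq_mul, Real.Gamma_one, Real.Gamma_two] at h
  rw [show (2 - s) * 1 + (s - 1) * 2 = s by ring] at h
  linarith

/-- Two-sided bound `c₀/(1-x) ≤ E_{α,1}(x) ≤ c₁/(1-x)` for `x ≤ 0`, uniformly in
`α ∈ [α₀, α₁] ⊂ (0,1)`. -/
theorem mittagLeffler_two_sided_bound (α₀ α₁ : ℝ) (h0 : 0 < α₀) (h01 : α₀ < α₁) (h1 : α₁ < 1) :
    ∃ c₀ c₁ : ℝ, 0 < c₀ ∧ 0 < c₁ ∧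
      ∀ α : ℝ, α₀ ≤ α → α ≤ α₁ → ∀ x : ℝ, x ≤ 0 →
        c₀ / (1 - x) ≤ ML α 1 x ∧ ML α 1 x ≤ c₁ / (1 - x) := by
  refine ⟨1 - α₁, 1, by linarith, one_pos, fun α hα₀ hα₁ x hx => ?_⟩
  have hα : 0 < α := by linarith
  have hα1 : α < 1 := by linarith
  rcases hx.eq_or_lt with rfl | hx
  · rw [ML_zero, Real.Gamma_one]
    constructor <;> norm_num
    linarith
  obtain ⟨t, ht, rfl⟩ : ∃ t : ℝ, 0 < t ∧ x = -t ^ α := by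
    refine ⟨(-x) ^ α⁻¹, Real.rpow_pos_of_pos (by linarith) _, ?_⟩
    rw [Real.rpow_inv_rpow (by linarith) hα.ne', neg_neg]
  have hy : 0 < t ^ α := by positivity
  have hup := ML_one_upper hα hα1 ht
  have hlow := ML_one_lower hα hα1 ht
  generalize ML α 1 (-t ^ α) = u at *
  generalize t ^ α = y at *
  have hΓ1 : Real.Gamma (α + 1) ≤ 1 := Gamma_le_one (by linarith) (by linarith)
  -- `Γ(1 - α) = Γ(2 - α) / (1 - α)` and `Γ(2 - α) ≤ 1`.
  have hΓ2 : (1 - α₁) * Real.Gamma (1 - α) ≤ 1 := by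
    have hrec := Real.Gamma_add_one (s := 1 - α) (by linarith)
    have := Gamma_le_one (s := 1 - α + 1) (by linarith) (by linarith)
    have := Real.Gamma_pos_of_pos (s := 1 - α) (by linarith)
    nlinarith
  have hΓ3 := Real.Gamma_pos_of_pos (s := 1 - α) (by linarith)
  have hΓ4 := Real.Gamma_pos_of_pos (s := α + 1) (by linarith)
  have hu : 0 < u := by
    by_contra! h
    have : 0 < 1 + Real.Gamma (1 - α) * y := by positivity
    nlinarith
  rw [sub_neg_eq_add, div_le_iff₀ (by linarith), le_div_iff₀ (by linarith)]
  constructor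
  · calc 1 - α₁ ≤ (1 - α₁) * (u * (1 + Real.Gamma (1 - α) * y)) :=
          le_mul_of_one_le_right (by linarith) hlow
      _ = u * ((1 - α₁) + (1 - α₁) * Real.Gamma (1 - α) * y) := by ring
      _ ≤ u * (1 + 1 * y) := by gcongr; linarith
      _ = u * (1 + y) := by ring
  · -- The upper estimate gives `u * y ≤ Γ(α + 1) * (1 - u)`, which also forces `u ≤ 1`.
    have : u ≤ 1 := by
      by_contra! h
      nlinarith [mul_pos hu hy]
    nlinarith
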